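/- arXiv:2602.16046 — 4 statements merged into one kernel-verified Lean document; each statement's English description precedes it below -/
import Mathlib

section
/- Let U be a free ultrafilter on ℕ with 𝔟(U) = 𝔡 and let {a_α : α < 𝔡} ⊆ [ω]^ω be a U-scale such that a_α ≤_U a_β whenever α ≤ β < 𝔡. For a, b ∈ [ω]^ω let a ⊎ b := {2k : k ∈ a} ∪ {2k+1 : k ∈ b}. Then the set {a_α ⊎ a_α : α < 𝔡} is a 2U-scale. -/
open Cardinal

/-- Subsets of `ℕ` are identified with their characteristic functions `ℕ → Bool`;
this way `P(ℕ)` is the Cantor cube `2^ℕ`, carrying the product topology. -/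
abbrev CSet : Type := ℕ → Bool

/-- The subset of `ℕ` coded by `a : CSet`. -/
def supp (a : CSet) : Set ℕ := {n | a n = true}

/-- `a ∈ [ω]^ω`: the coded set is infinite. -/
def InfS (a : CSet) : Prop := (supp a).Infinite

/-- The increasing enumeration of the set coded by `a`. -/
noncomputable def enum (a : CSet) : ℕ → ℕ := Nat.nth (fun n => a n = true)

/-- `a ≤* b`: the set `[a ≤ b]` (computed on increasing enumerations) is cofinite. -/
def LeStarS (a b : CSet) : Prop := {n | ¬ enum a n ≤ enum b n}.Finite

/-- `a ≤_U b`: the set `[a ≤ b]` (computed on increasing enumerations) is in `U`. -/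
def LeUS (U : Ultrafilter ℕ) (a b : CSet) : Prop := {n | enum a n ≤ enum b n} ∈ U

/-- An ultrafilter is free if it extends the cofinite filter. -/
def Free (U : Ultrafilter ℕ) : Prop := (U : Filter ℕ) ≤ Filter.cofinite

/-- A subset of `[ω]^ω` is bounded if some element of `[ω]^ω` `≤*`-dominates it. -/
def BoundedS (A : Set CSet) : Prop := ∃ b : CSet, InfS b ∧ ∀ a ∈ A, LeStarS a b

/-- A subset of `[ω]^ω` is `≤_U`-bounded if some element of `[ω]^ω` `≤_U`-dominates it. -/
def UBoundedS (U : Ultrafilter ℕ) (A : Set CSet) : Prop :=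
  ∃ b : CSet, InfS b ∧ ∀ a ∈ A, LeUS U a b

/-- `D ⊆ [ω]^ω` is dominating if it `≤*`-dominates every element of `[ω]^ω`. -/
def DominatingS (D : Set CSet) : Prop :=
  (∀ d ∈ D, InfS d) ∧ ∀ a : CSet, InfS a → ∃ d ∈ D, LeStarS a d

/-- `𝔡`: the least cardinality of a dominating subset of `[ω]^ω`. -/
noncomputable def frakDS : Cardinal := sInf {c | ∃ D : Set CSet, DominatingS D ∧ c = #D}

/-- `𝔟(U)`: the least cardinality of a `≤_U`-unbounded subset of `[ω]^ω`. -/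
noncomputable def frakBUS (U : Ultrafilter ℕ) : Cardinal :=
  sInf {c | ∃ A : Set CSet, (∀ a ∈ A, InfS a) ∧ ¬ UBoundedS U A ∧ c = #A}

/-- `Y ⊆ [ω]^ω` is a `U`-scale if for every `b ∈ [ω]^ω` the relation `b ≤_U y` holds
for all but fewer than `𝔟(U)` many `y ∈ Y`. -/
def UScaleS (U : Ultrafilter ℕ) (Y : Set CSet) : Prop :=
  (∀ y ∈ Y, InfS y) ∧
    ∀ b : CSet, InfS b → #({y ∈ Y | ¬ LeUS U b y} : Set CSet) < frakBUS U

/-- `Fin`: the family of (codes of) finite subsets of `ℕ`. -/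
def FinS : Set CSet := {a | (supp a).Finite}

/-- `2u := {2n : n ∈ u}` on codes. -/
def double (x : CSet) : CSet := fun n => if n % 2 = 0 then x (n / 2) else false

/-- `a ⊎ b := {2k : k ∈ a} ∪ {2k+1 : k ∈ b}` on codes. -/
def uplus (a b : CSet) : CSet := fun n => if n % 2 = 0 then a (n / 2) else b (n / 2)

/-- Symmetric difference `⊕` on codes. -/
def symmD (a b : CSet) : CSet := fun n => xor (a n) (b n)

/-- `2U`: the ultrafilter generated by `{2u : u ∈ U}`, i.e. the pushforward of `U`
under `n ↦ 2n`. -/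
def twoU (U : Ultrafilter ℕ) : Ultrafilter ℕ := U.map (fun n => 2 * n)

/-!
Let `φ : ℕ → ℕ` be strictly increasing. Passing from `b` to its subset enumerated by `b ∘ φ` turns
`φ(U)`-domination of `b` into `U`-domination: if `b ∘ φ ≤_U a` and `a(n) ≤ c(φ(n))` for all `n`,
then `b ≤_{φ(U)} c`. Since `a(n) ≤ a(φ(n))`, taking `c = a` gives `𝔟(U) ≤ 𝔟(φ(U))`, and then
replacing each member `y` of a `U`-scale by some `c` with `y(n) ≤ c(φ(n))` gives a `φ(U)`-scale. For
`φ(n) = 2n` one can take `c = y ⊎ y`, because `(y ⊎ y)(2n) = 2y(n)`.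
-/

theorem InfS.enum_strictMono {a : CSet} (ha : InfS a) : StrictMono (enum a) :=
  Nat.nth_strictMono ha

/-- The code of the range of `f`; for strictly increasing `f` this is the element of `[ω]^ω` whose
increasing enumeration is `f`. -/
noncomputable def rangeCode (f : ℕ → ℕ) : CSet :=
  open scoped Classical in fun n => decide (n ∈ Set.range f)

theorem supp_rangeCode (f : ℕ → ℕ) : supp (rangeCode f) = Set.range f := by
  ext n
  simp [supp, rangeCode]

theorem infS_rangeCode {f : ℕ → ℕ} (hf : f.Injective) : InfS (rangeCode f) := by
  rw [InfS, supp_rangeCode]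
  exact Set.infinite_range_of_injective hf

theorem enum_rangeCode {f : ℕ → ℕ} (hf : StrictMono f) : enum (rangeCode f) = f := by
  have hinf := infS_rangeCode hf.injective
  have hrange : Set.range (enum (rangeCode f)) = Set.range f :=
    (Nat.range_nth_of_infinite hinf).trans (supp_rangeCode f)
  exact (hinf.enum_strictMono.range_inj hf).1 hrange

/-- The subset of the infinite set `a` consisting of the elements whose index in its enumeration
lies in the range of `φ`; for strictly increasing `φ` it is enumerated by `enum a ∘ φ`. It reduces
`≤_{φ(U)}` to `≤_U`. -/
noncomputable def subseq (φ : ℕ → ℕ) (a : CSet) : CSet := rangeCode (enum a ∘ φ)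

theorem not_uBoundedS_setOf_infS (U : Ultrafilter ℕ) : ¬ UBoundedS U {a | InfS a} := by
  rintro ⟨b, hb, hbound⟩
  have hf : StrictMono fun n => enum b n + 1 := hb.enum_strictMono.add_const 1
  have hle : LeUS U (rangeCode fun n => enum b n + 1) b := hbound _ (infS_rangeCode hf.injective)
  simp [LeUS, enum_rangeCode hf] at hle

section Map

variable {U : Ultrafilter ℕ} {φ : ℕ → ℕ}

theorem InfS.subseq {a : CSet} (ha : InfS a) (hφ : φ.Injective) : InfS (subseq φ a) :=
  infS_rangeCode (ha.enum_strictMono.injective.comp hφ)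

theorem enum_subseq {a : CSet} (ha : InfS a) (hφ : StrictMono φ) :
    enum (subseq φ a) = enum a ∘ φ :=
  enum_rangeCode (ha.enum_strictMono.comp hφ)

theorem LeUS.map_of_subseq {a b c : CSet} (h : LeUS U (subseq φ b) a) (hφ : StrictMono φ)
    (hb : InfS b) (hac : ∀ n, enum a n ≤ enum c (φ n)) : LeUS (U.map φ) b c := by
  rw [LeUS, enum_subseq hb hφ] at h
  exact Ultrafilter.mem_map.2 (Filter.mem_of_superset h fun n hn => hn.trans (hac n))

theorem UBoundedS.map_of_image_subseq {A : Set CSet} (h : UBoundedS U (subseq φ '' A))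
    (hφ : StrictMono φ) (hA : ∀ a ∈ A, InfS a) : UBoundedS (U.map φ) A := by
  obtain ⟨b, hb, hbound⟩ := h
  exact ⟨b, hb, fun a ha => (hbound _ (Set.mem_image_of_mem _ ha)).map_of_subseq hφ (hA a ha)
    fun _ => hb.enum_strictMono.monotone hφ.le_apply⟩

theorem frakBUS_le_frakBUS_map (U : Ultrafilter ℕ) (hφ : StrictMono φ) :
    frakBUS U ≤ frakBUS (U.map φ) := by
  refine le_csInf ⟨_, {a | InfS a}, fun _ h => h, not_uBoundedS_setOf_infS _, rfl⟩ ?_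
  rintro _ ⟨A, hA, hunbdd, rfl⟩
  calc frakBUS U ≤ #(subseq φ '' A) :=
        csInf_le' ⟨subseq φ '' A, Set.forall_mem_image.2 fun a ha => (hA a ha).subseq hφ.injective,
          fun h => hunbdd (h.map_of_image_subseq hφ hA), rfl⟩
    _ ≤ #A := mk_image_le

theorem UScaleS.map_image {Y : Set CSet} {e : CSet → CSet} (hY : UScaleS U Y) (hφ : StrictMono φ)
    (he : ∀ y ∈ Y, InfS (e y)) (hle : ∀ y ∈ Y, ∀ n, enum y n ≤ enum (e y) (φ n)) :
    UScaleS (U.map φ) (e '' Y) := by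
  refine ⟨Set.forall_mem_image.2 he, fun b hb => ?_⟩
  have hsub : {z ∈ e '' Y | ¬ LeUS (U.map φ) b z} ⊆
      e '' {y ∈ Y | ¬ LeUS U (subseq φ b) y} := by
    rintro _ ⟨⟨y, hy, rfl⟩, hnot⟩
    exact ⟨y, ⟨hy, fun h => hnot (h.map_of_subseq hφ hb (hle y hy))⟩, rfl⟩
  calc #{z ∈ e '' Y | ¬ LeUS (U.map φ) b z}
      ≤ #(e '' {y ∈ Y | ¬ LeUS U (subseq φ b) y}) := mk_le_mk_of_subset hsub
    _ ≤ #{y ∈ Y | ¬ LeUS U (subseq φ b) y} := mk_image_le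
    _ < frakBUS U := hY.2 _ (hb.subseq hφ.injective)
    _ ≤ frakBUS (U.map φ) := frakBUS_le_frakBUS_map U hφ

end Map

theorem uplus_two_mul (a b : CSet) (n : ℕ) : uplus a b (2 * n) = a n := by
  simp [uplus]

theorem uplus_two_mul_add_one (a b : CSet) (n : ℕ) : uplus a b (2 * n + 1) = b n := by
  have hdiv : (2 * n + 1) / 2 = n := by omega
  simp [uplus, hdiv]

theorem InfS.uplus_left {a : CSet} (ha : InfS a) (b : CSet) : InfS (uplus a b) := by
  have himage : (2 * ·) '' supp a ⊆ supp (uplus a b) :=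
    Set.image_subset_iff.2 fun n hn => (uplus_two_mul a b n).trans hn
  exact (ha.image (mul_right_injective₀ two_ne_zero).injOn).mono himage

theorem count_uplus_two_mul (a b : CSet) (m : ℕ) :
    Nat.count (fun n => uplus a b n = true) (2 * m) =
      Nat.count (fun n => a n = true) m + Nat.count (fun n => b n = true) m := by
  induction m with
  | zero => simp
  | succ m ih =>
    rw [mul_add_one, Nat.count_succ, Nat.count_succ, ih, uplus_two_mul, uplus_two_mul_add_one,
      Nat.count_succ, Nat.count_succ]
    ring

theorem enum_uplus_self_two_mul {a : CSet} (ha : InfS a) (n : ℕ) :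
    enum (uplus a a) (2 * n) = 2 * enum a n := by
  have hmem : uplus a a (2 * enum a n) = true :=
    (uplus_two_mul a a _).trans (Nat.nth_mem_of_infinite ha n)
  have hcount : Nat.count (fun k => uplus a a k = true) (2 * enum a n) = 2 * n := by
    rw [count_uplus_two_mul, enum, Nat.count_nth_of_infinite ha, two_mul]
  rw [← hcount]
  exact Nat.nth_count hmem

theorem stmt4_general {U : Ultrafilter ℕ} {Y : Set CSet} (hY : UScaleS U Y) :
    UScaleS (twoU U) ((fun y => uplus y y) '' Y) := by
  refine hY.map_image (strictMono_mul_left_of_pos two_pos) (fun y hy => (hY.1 y hy).uplus_left y)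
    fun y hy n => ?_
  rw [enum_uplus_self_two_mul (hY.1 y hy)]
  exact Nat.le_mul_of_pos_left _ two_pos

/-- if `U` is free with `𝔟(U) = 𝔡` and `{a_α : α < 𝔡}` is a `U`-scale
with `a_α ≤_U a_β` for `α ≤ β < 𝔡`, then `{a_α ⊎ a_α : α < 𝔡}` is a `2U`-scale. -/
theorem stmt4 (U : Ultrafilter ℕ) (hU : Free U) (hbd : frakBUS U = frakDS)
    (a : ↥(Set.Iio frakDS.ord) → CSet) (hainf : ∀ α, InfS (a α))
    (hscale : UScaleS U (Set.range a))
    (hmono : ∀ α β : ↥(Set.Iio frakDS.ord), α ≤ β → LeUS U (a α) (a β)) :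
    UScaleS (twoU U) (Set.range fun α => uplus (a α) (a α)) := by
  rw [Set.range_comp' (fun y => uplus y y) a]
  exact stmt4_general hscale
end

section
/- Let X ⊆ [ω]^ω, let {d_α : α < 𝔡} ⊆ [ω]^ω be a dominating set, let {a_α : α < 𝔡} ⊆ X, and for each α < 𝔡 let d'_α ∈ [ω]^ω satisfy a_α(n) ≤ d'_α(n) and d_α(n) ≤ d'_α(n) for all n. Put Y := {a_α ⊎ d'_α : α < 𝔡}, where a ⊎ b := {2k : k ∈ a} ∪ {2k+1 : k ∈ b}. Then the set (2X) ⊕ (Y ∪ Fin) := {2x ⊕ y : x ∈ X, y ∈ Y ∪ Fin} is contained in [ω]^ω and is a dominating subset of [ω]^ω, where 2x := {2n : n ∈ x} and ⊕ denotes symmetric difference of subsets of ℕ. -/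
open Cardinal

/-!
The identity `2x ⊕ (a ⊎ b) = (x ⊕ a) ⊎ b` shows that this set is infinite whenever `b` is. For
`x = a` it reduces to `{2k + 1 : k ∈ b}`, whose enumeration `n ↦ 2 b(n) + 1` is pointwise above
that of `b`. Hence the sets `2a_α ⊕ (a_α ⊎ d'_α)` already dominate whenever the `d'_α` do.
-/

theorem LeStarS.of_forall_le {a b : CSet} (h : ∀ n, enum a n ≤ enum b n) : LeStarS a b := by
  simp only [LeStarS, h, not_true_eq_false, Set.ofPred_false, Set.finite_empty]

theorem LeStarS.trans {a b c : CSet} (hab : LeStarS a b) (hbc : LeStarS b c) : LeStarS a c := by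
  refine (hab.union hbc).subset fun n hac => ?_
  by_contra h
  simp only [Set.mem_union, Set.mem_ofPred_eq, not_or, not_not] at h
  exact hac (h.1.trans h.2)

theorem DominatingS.of_forall_exists_leStarS {D E : Set CSet} (hD : DominatingS D)
    (hE : ∀ e ∈ E, InfS e) (h : ∀ d ∈ D, ∃ e ∈ E, LeStarS d e) : DominatingS E := by
  refine ⟨hE, fun a ha => ?_⟩
  obtain ⟨d, hd, had⟩ := hD.2 a ha
  obtain ⟨e, he, hde⟩ := h d hd
  exact ⟨e, he, had.trans hde⟩

theorem enum_of_supp_eq_image {f : ℕ → ℕ} (hf : StrictMono f) {z b : CSet} (hb : InfS b)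
    (hz : supp z = f '' supp b) (n : ℕ) : enum z n = f (enum b n) := by
  have hz_inf : (supp z).Infinite := hz ▸ hb.image hf.injective.injOn
  have hz_comp : ∀ k, z (f k) = true ↔ b k = true := fun k => by
    change f k ∈ supp z ↔ k ∈ supp b
    rw [hz, hf.injective.mem_set_image]
  have hz_range : ∀ m, z m = true → m ∈ Set.range f := fun m hm =>
    Set.image_subset_range f (supp b) (hz ▸ (show m ∈ supp z from hm))
  have h_nth := Nat.nth_comp_of_strictMono (n := n) hf hz_range fun hfin => absurd hfin hz_inf
  simpa only [enum, hz_comp] using h_nth.symm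

theorem supp_bot : supp ⊥ = ∅ :=
  Set.eq_empty_of_forall_notMem fun _ => Bool.false_ne_true

theorem supp_uplus (a b : CSet) :
    supp (uplus a b) = (fun k => 2 * k) '' supp a ∪ (fun k => 2 * k + 1) '' supp b := by
  ext n
  obtain ⟨k, rfl | rfl⟩ := n.even_or_odd'
  · have h_odd : ∀ l, 2 * l + 1 ≠ 2 * k := fun l => by omega
    simp [supp, uplus, h_odd]
  · have h_even : ∀ l, 2 * l ≠ 2 * k + 1 := fun l => by omega
    have h_div : (2 * k + 1) / 2 = k := by omega
    simp [supp, uplus, h_even, h_div]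

theorem supp_symmD (a b : CSet) : supp (symmD a b) = symmDiff (supp a) (supp b) := by
  ext n
  cases ha : a n <;> cases hb : b n <;> simp [supp, symmD, Set.mem_symmDiff, ha, hb]

theorem symmD_self (a : CSet) : symmD a a = ⊥ :=
  funext fun n => Bool.xor_self (a n)

theorem double_eq_uplus_bot (x : CSet) : double x = uplus x ⊥ := rfl

theorem symmD_double_uplus (x a b : CSet) :
    symmD (double x) (uplus a b) = uplus (symmD x a) b := by
  funext n
  by_cases h : n % 2 = 0 <;> simp [symmD, double, uplus, h]

theorem strictMono_two_mul_add_one : StrictMono fun k : ℕ => 2 * k + 1 :=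
  (strictMono_mul_left_of_pos two_pos).add_const 1

theorem InfS.uplus_right {b : CSet} (hb : InfS b) (a : CSet) : InfS (uplus a b) := by
  rw [InfS, supp_uplus]
  exact (hb.image strictMono_two_mul_add_one.injective.injOn).mono Set.subset_union_right

theorem InfS.symmD_of_mem_FinS {z y : CSet} (hz : InfS z) (hy : y ∈ FinS) :
    InfS (symmD z y) := by
  rw [InfS, supp_symmD]
  exact (hz.sdiff hy).mono Set.subset_union_left

theorem enum_uplus_bot_left {b : CSet} (hb : InfS b) (n : ℕ) :
    enum (uplus ⊥ b) n = 2 * enum b n + 1 := by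
  have h_supp : supp (uplus ⊥ b) = (fun k => 2 * k + 1) '' supp b := by
    rw [supp_uplus, supp_bot, Set.image_empty, Set.empty_union]
  exact enum_of_supp_eq_image strictMono_two_mul_add_one hb h_supp n

theorem leStarS_symmD_double_uplus_self (a : CSet) {b : CSet} (hb : InfS b) :
    LeStarS b (symmD (double a) (uplus a b)) := by
  rw [symmD_double_uplus, symmD_self]
  refine .of_forall_le fun n => ?_
  rw [enum_uplus_bot_left hb]
  omega

theorem stmt5_general {ι : Sort*} {X : Set CSet} (hX : ∀ x ∈ X, InfS x) {a b : ι → CSet}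
    (ha : ∀ i, a i ∈ X) (hb : DominatingS (Set.range b)) :
    DominatingS
      {z | ∃ x ∈ X, ∃ y ∈ (Set.range fun i => uplus (a i) (b i)) ∪ FinS,
        z = symmD (double x) y} := by
  have hb_inf : ∀ i, InfS (b i) := fun i => hb.1 _ ⟨i, rfl⟩
  refine hb.of_forall_exists_leStarS ?_ ?_
  · rintro _ ⟨x, hx, _, ⟨i, rfl⟩ | hy, rfl⟩
    · rw [symmD_double_uplus]
      exact (hb_inf i).uplus_right _
    · rw [double_eq_uplus_bot]
      exact ((hX x hx).uplus_left ⊥).symmD_of_mem_FinS hy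
  · rintro _ ⟨i, rfl⟩
    exact ⟨_, ⟨a i, ha i, _, Or.inl ⟨i, rfl⟩, rfl⟩, leStarS_symmD_double_uplus_self _ (hb_inf i)⟩

/-- with `{d_α : α < 𝔡}` dominating, `{a_α : α < 𝔡} ⊆ X ⊆ [ω]^ω`,
`d'_α ∈ [ω]^ω` pointwise above `a_α` and `d_α`, and `Y := {a_α ⊎ d'_α : α < 𝔡}`,
the set `(2X) ⊕ (Y ∪ Fin)` is a dominating subset of `[ω]^ω`. -/
theorem stmt5 (X : Set CSet) (hX : ∀ x ∈ X, InfS x)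
    (d : ↥(Set.Iio frakDS.ord) → CSet) (hd : DominatingS (Set.range d))
    (a : ↥(Set.Iio frakDS.ord) → CSet) (ha : ∀ α, a α ∈ X)
    (d' : ↥(Set.Iio frakDS.ord) → CSet) (hd'inf : ∀ α, InfS (d' α))
    (hle : ∀ α n, enum (a α) n ≤ enum (d' α) n ∧ enum (d α) n ≤ enum (d' α) n) :
    DominatingS
      {z | ∃ x ∈ X, ∃ y ∈ (Set.range fun α => uplus (a α) (d' α)) ∪ FinS,
        z = symmD (double x) y} :=
  stmt5_general hX ha <| hd.of_forall_exists_leStarS (Set.forall_mem_range.2 hd'inf) <|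
    Set.forall_mem_range.2 fun α => ⟨d' α, ⟨α, rfl⟩, .of_forall_le fun n => (hle α n).2⟩
end

section
/- Assume 𝔟 = 𝔡. Let X be an infinite Tychonoff space such that for every free ultrafilter U on ℕ and every hereditarily Lindelöf U-Menger infinite Tychonoff space T, the product X × T is U-Menger. Then X × H is Hurewicz for every hereditarily Lindelöf Hurewicz infinite Tychonoff space H (i.e., in the class of hereditarily Lindelöf spaces, each space which is productively U-Menger for all ultrafilters U is productively Hurewicz). -/
open Cardinal

/-- `a ≤* b`: the set `[a ≤ b]` is cofinite. -/
def LeStar (a b : ℕ → ℕ) : Prop := {n | ¬ a n ≤ b n}.Finite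

/-- `a ≤^∞ b`: the set `[a ≤ b]` is infinite. -/
def LeInf (a b : ℕ → ℕ) : Prop := {n | a n ≤ b n}.Infinite

/-- `a ≤_U b`: the set `[a ≤ b]` belongs to the ultrafilter `U`. -/
def LeU (U : Ultrafilter ℕ) (a b : ℕ → ℕ) : Prop := {n | a n ≤ b n} ∈ U

/-- Elements of `[ω]^ω`, identified with their increasing enumerations. -/
abbrev IncSeq : Type := {f : ℕ → ℕ // StrictMono f}

/-- A subset of `[ω]^ω` is bounded if some element of `[ω]^ω` `≤*`-dominates it. -/
def Bounded (A : Set IncSeq) : Prop := ∃ b : IncSeq, ∀ a ∈ A, LeStar a.1 b.1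

/-- A subset of `[ω]^ω` is dominating if it `≤*`-dominates every element of `[ω]^ω`. -/
def Dominating (D : Set IncSeq) : Prop := ∀ a : IncSeq, ∃ d ∈ D, LeStar a.1 d.1

/-- A subset of `[ω]^ω` is `≤_U`-bounded if some element of `[ω]^ω` `≤_U`-dominates it. -/
def UBounded (U : Ultrafilter ℕ) (A : Set IncSeq) : Prop := ∃ b : IncSeq, ∀ a ∈ A, LeU U a.1 b.1

/-- `𝔟`: the least cardinality of an unbounded subset of `[ω]^ω`. -/
noncomputable def frakB : Cardinal := sInf {c | ∃ A : Set IncSeq, ¬ Bounded A ∧ c = #A}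

/-- `𝔡`: the least cardinality of a dominating subset of `[ω]^ω`. -/
noncomputable def frakD : Cardinal := sInf {c | ∃ D : Set IncSeq, Dominating D ∧ c = #D}

/-- `𝔟(U)`: the least cardinality of a `≤_U`-unbounded subset of `[ω]^ω`. -/
noncomputable def frakBU (U : Ultrafilter ℕ) : Cardinal :=
  sInf {c | ∃ A : Set IncSeq, ¬ UBounded U A ∧ c = #A}

/-- A set `A ⊆ [ω]^ω` is `𝔡`-unbounded if `|A| ≥ 𝔡` and every bounded subset of `A`
has cardinality less than `𝔡`. -/
def DUnbounded (A : Set IncSeq) : Prop :=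
  frakD ≤ #A ∧ ∀ B ⊆ A, Bounded B → #B < frakD

/-- A space is Hurewicz if for every sequence of open covers there are finite
subfamilies such that every point belongs to `⋃ F n` for all but finitely many `n`. -/
def Hurewicz (Z : Type*) [TopologicalSpace Z] : Prop :=
  ∀ 𝒰 : ℕ → Set (Set Z), (∀ n, (∀ u ∈ 𝒰 n, IsOpen u) ∧ ⋃₀ 𝒰 n = Set.univ) →
    ∃ F : ℕ → Set (Set Z), (∀ n, F n ⊆ 𝒰 n ∧ (F n).Finite) ∧
      ∀ z : Z, {n | z ∉ ⋃₀ F n}.Finite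

/-- A space is `U`-Menger if for every sequence of open covers there are finite
subfamilies such that `{n | z ∈ ⋃ F n} ∈ U` for every point `z`. -/
def UMenger (U : Ultrafilter ℕ) (Z : Type*) [TopologicalSpace Z] : Prop :=
  ∀ 𝒰 : ℕ → Set (Set Z), (∀ n, (∀ u ∈ 𝒰 n, IsOpen u) ∧ ⋃₀ 𝒰 n = Set.univ) →
    ∃ F : ℕ → Set (Set Z), (∀ n, F n ⊆ 𝒰 n ∧ (F n).Finite) ∧
      ∀ z : Z, {n | z ∈ ⋃₀ F n} ∈ U

universe u v w

/-!
Write `X × H` as `Y`. For every free ultrafilter `U` the Hurewicz space `H` is `U`-Menger, hence so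
is `Y`, and it remains to see that, under `𝔟 = 𝔡`, a space which is `U`-Menger for all free `U` is
Hurewicz. In a Lindelöf space both properties can be tested on covers `{O n k | k}` with `O`
increasing in `k` and decreasing in `n`, and there they say that the functions sending `n` to the
least `k` with `y ∈ O n k` are bounded modulo `U`, respectively modulo finite sets. So the claim is
combinatorial: an unbounded `Z ⊆ [ω]^ω` is unbounded modulo some free ultrafilter. Given a
dominating family `(d i)` of length `𝔡`, choose `z i ∈ Z` recursively so that every infinite
intersection of finitely many of the earlier sets `[d j < z j]` still meets `[d i < z i]` in an
infinite set; this is possible because there are fewer than `𝔡 = 𝔟` such intersections. An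
ultrafilter containing all the sets `[d i < z i]` is as required.

The spaces `T` and `H` may live in different universes, so `H` has to be replaced by a homeomorphic
copy. This uses de Groot's theorem that a hereditarily Lindelöf Hausdorff space has at most
continuum many points, here in the weaker form that it is small in every universe.
-/

section Ramification

open Set Function

variable {α ι κ : Type*} [Preorder ι]

/-- The node at height `ξ` on the branch of `y` in the Erdős–Rado ramification tree of the
colouring `f` of pairs: a point chosen to depend only on the colours `f (node ζ) y` of `y` with
respect to the earlier nodes of its branch, and having the same colours itself. -/
noncomputable def ramificationNode [WellFoundedLT ι] [Nonempty α] (f : α → α → κ) (ξ : ι)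
    (y : α) : α :=
  invFun (fun x (ζ : Iio ξ) ↦ f (ramificationNode f ζ.1 x) x)
    fun ζ ↦ f (ramificationNode f ζ.1 y) y
termination_by wellFounded_lt.wrap ξ
decreasing_by all_goals exact ζ.2

variable [WellFoundedLT ι] [Nonempty α]

theorem ramificationNode_congr {f : α → α → κ} {ξ : ι} {x y : α}
    (h : ∀ ζ < ξ, f (ramificationNode f ζ x) x = f (ramificationNode f ζ y) y) :
    ramificationNode f ξ x = ramificationNode f ξ y := by
  rw [ramificationNode, ramificationNode.eq_1 f ξ y]
  congr 1
  exact funext fun ζ ↦ h ζ.1 ζ.2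

theorem color_ramificationNode (f : α → α → κ) {ζ ξ : ι} (h : ζ < ξ) (y : α) :
    f (ramificationNode f ζ (ramificationNode f ξ y)) (ramificationNode f ξ y) =
      f (ramificationNode f ζ y) y := by
  rw [ramificationNode.eq_1 f ξ y]
  exact congrFun (invFun_eq
    (f := fun x (ζ : Iio ξ) ↦ f (ramificationNode f ζ.1 x) x) ⟨y, rfl⟩) ⟨ζ, h⟩

theorem ramificationNode_ramificationNode (f : α → α → κ) {ζ ξ : ι} (h : ζ < ξ) (y : α) :
    ramificationNode f ζ (ramificationNode f ξ y) = ramificationNode f ζ y :=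
  ramificationNode_congr fun _ hη ↦ color_ramificationNode f (hη.trans h) y

end Ramification

theorem exists_endHomogeneous_of_not_small {α κ : Type*} (ι : Type*) [Preorder ι] [WellFoundedLT ι]
    [Small.{v} ι] [Small.{v} κ] (hα : ¬ Small.{v} α) (f : α → α → κ)
    (hf : ∀ x y, f x y = f x x → x = y) :
    ∃ (p : ι → α) (y : α), ∀ ζ, p ζ ≠ y ∧ ∀ ξ > ζ, f (p ζ) (p ξ) = f (p ζ) y := by
  have : Nonempty α := by
    by_contra h
    rw [not_nonempty_iff] at h
    exact hα inferInstance
  have hcode : ¬ Function.Injective fun (y : α) (ζ : ι) ↦ f (ramificationNode f ζ y) y :=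
    fun h ↦ hα (small_of_injective h)
  obtain ⟨x, y, hxy, hne⟩ : ∃ x y, (fun ζ : ι ↦ f (ramificationNode f ζ x) x) =
      (fun ζ : ι ↦ f (ramificationNode f ζ y) y) ∧ x ≠ y := by
    simpa [Function.Injective] using hcode
  refine ⟨fun ζ ↦ ramificationNode f ζ y, y, fun ζ ↦ ⟨fun hy ↦ hne ?_, fun ξ hξ ↦ ?_⟩⟩
  · have hnode : ramificationNode f ζ x = y :=
      (ramificationNode_congr fun η _ ↦ congrFun hxy η).trans hy
    have hcolor : f y x = f y y := by simpa only [hnode, hy] using congrFun hxy ζ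
    exact (hf y x hcolor).symm
  · simpa only [ramificationNode_ramificationNode f hξ] using color_ramificationNode f hξ y

section HereditarilyLindelof

open Set

variable {Y : Type*} [TopologicalSpace Y] [HereditarilyLindelofSpace Y]

theorem isGδ_singleton_of_hereditarilyLindelofSpace [T2Space Y] (x : Y) : IsGδ {x} := by
  have hsep : ∀ y : {y // y ≠ x}, ∃ V : Set Y, IsOpen V ∧ x ∈ V ∧ y.1 ∉ closure V := fun y ↦ by
    obtain ⟨V, W, hV, hW, hxV, hyW, hVW⟩ := t2_separation y.2.symm
    exact ⟨V, hV, hxV, disjoint_right.1 (hVW.closure_left hW) hyW⟩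
  choose V hV hxV hyV using hsep
  obtain ⟨t, ht, hinter⟩ := eq_closed_inter_countable (fun y ↦ closure (V y))
    fun _ ↦ isClosed_closure
  have hsingleton : ({x} : Set Y) = ⋂ y ∈ t, V y := by
    refine Subset.antisymm (singleton_subset_iff.2 (mem_iInter₂.2 fun y _ ↦ hxV y)) fun z hz ↦ ?_
    by_contra hzx
    have hz' : z ∈ ⋂ y ∈ t, closure (V y) :=
      iInter₂_mono (fun y _ ↦ subset_closure) hz
    rw [hinter] at hz'
    exact hyV ⟨z, hzx⟩ (mem_iInter.1 hz' ⟨z, hzx⟩)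
  rw [hsingleton]
  exact .biInter_of_isOpen ht fun y _ ↦ hV y

theorem countable_of_rightSeparated {ι : Type*} [LinearOrder ι] (hι : ∀ i : ι, (Iic i).Countable)
    {s : Set ι} {p : ι → Y} {V : ι → Set Y} (hV : ∀ i, IsOpen (V i)) (hmem : ∀ i, p i ∈ V i)
    (hsep : ∀ i ∈ s, ∀ j > i, p j ∉ V i) : s.Countable := by
  obtain ⟨r, hr, hcov⟩ := (HereditarilyLindelofSpace.isLindelof (p '' s)).elim_countable_subcover
    (fun i : s ↦ V i) (fun i ↦ hV i) (by
      rintro _ ⟨i, hi, rfl⟩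
      exact mem_iUnion.2 ⟨⟨i, hi⟩, hmem i⟩)
  refine (hr.biUnion fun i _ ↦ hι i).mono fun j hj ↦ ?_
  obtain ⟨i, hir, hji⟩ := mem_iUnion₂.1 (hcov (mem_image_of_mem p hj))
  exact mem_iUnion₂.2 ⟨i, hir, not_lt.1 fun hij ↦ hsep i i.2 j hij hji⟩

theorem countable_Iic_toType_aleph_one (i : (ℵ₁ : Cardinal).ord.ToType) : (Iic i).Countable := by
  have hlt : #(Iio i) < Order.succ ℵ₀ := by simpa [succ_aleph0] using mk_Iio_lt i
  rw [← Iio_insert]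
  exact (le_aleph0_iff_set_countable.1 (Order.lt_succ_iff.1 hlt)).insert i

theorem small_of_isGδ_singleton (hY : ∀ x : Y, IsGδ {x}) : Small.{v} Y := by
  by_contra hsmall
  choose V hV hVx using fun x ↦ isGδ_iff_eq_iInter_nat.1 (hY x)
  have hmem : ∀ x n, x ∈ V x n := fun x ↦ mem_iInter.1 (hVx x ▸ mem_singleton x)
  have hinj : ∀ x y, {n | y ∈ V x n} = {n | x ∈ V x n} → x = y := fun x y h ↦ by
    have hy : y ∈ ({x} : Set Y) := by
      rw [hVx x]
      exact mem_iInter.2 fun n ↦ h.ge (hmem x n)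
    exact hy.symm
  obtain ⟨p, y, hp⟩ := exists_endHomogeneous_of_not_small (ℵ₁ : Cardinal.{0}).ord.ToType hsmall
    (fun x y ↦ {n | y ∈ V x n}) hinj
  have hout : ∀ ζ, ∃ n, y ∉ V (p ζ) n := fun ζ ↦ by
    by_contra! h
    exact (hp ζ).1 (hinj _ _ (by simp [h, hmem]))
  choose n hn using hout
  have hfiber : ∀ m, {ζ | n ζ = m}.Countable := fun m ↦
    countable_of_rightSeparated countable_Iic_toType_aleph_one (V := fun ζ ↦ V (p ζ) m)
      (fun ζ ↦ hV _ m) (fun ζ ↦ hmem _ m) (by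
        rintro ζ rfl ξ hξ hmem'
        exact hn ζ (((hp ζ).2 ξ hξ).le hmem'))
  have hcount : (Set.univ : Set (ℵ₁ : Cardinal.{0}).ord.ToType).Countable :=
    (countable_iUnion hfiber).mono fun ζ _ ↦ mem_iUnion.2 ⟨n ζ, rfl⟩
  have hle : ℵ₁ ≤ ℵ₀ := by
    simpa only [mk_univ, mk_ord_toType] using le_aleph0_iff_set_countable.2 hcount
  exact hle.not_gt aleph0_lt_aleph_one

end HereditarilyLindelof

section Combinatorics

open Filter Set

theorem exists_incSeq_ge (f : ℕ → ℕ) : ∃ g : IncSeq, ∀ n, f n ≤ g.1 n :=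
  ⟨⟨fun n ↦ n + partialSups f n, strictMono_id.add_monotone (partialSups f).monotone⟩,
    fun n ↦ (le_partialSups f n).trans (Nat.le_add_left _ _)⟩

theorem bounded_of_finite {A : Set IncSeq} (hA : A.Finite) : Bounded A := by
  obtain ⟨b, hb⟩ := exists_incSeq_ge fun n ↦ ∑ a ∈ hA.toFinset, a.1 n
  refine ⟨b, fun a ha ↦ Eventually.of_forall (f := cofinite) fun n ↦ le_trans ?_ (hb n)⟩
  exact Finset.single_le_sum (f := fun a : IncSeq ↦ a.1 n) (fun _ _ ↦ Nat.zero_le _)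
    (hA.mem_toFinset.2 ha)

theorem not_bounded_univ : ¬ Bounded Set.univ := fun ⟨b, hb⟩ ↦ by
  have hsucc : ∀ᶠ n in cofinite, b.1 n + 1 ≤ b.1 n :=
    hb ⟨fun n ↦ b.1 n + 1, b.2.add_const 1⟩ (mem_univ _)
  obtain ⟨n, hn⟩ := hsucc.exists
  omega

theorem aleph0_le_frakB : ℵ₀ ≤ frakB := by
  refine le_csInf ⟨_, Set.univ, not_bounded_univ, rfl⟩ ?_
  rintro _ ⟨A, hA, rfl⟩
  exact infinite_iff.1 (infinite_coe_iff.2 fun hfin ↦ hA (bounded_of_finite hfin))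

theorem exists_eventually_le_of_mk_lt_frakB {κ : Type} (hκ : #κ < frakB) (f : κ → ℕ → ℕ) :
    ∃ b : IncSeq, ∀ i, ∀ᶠ n in cofinite, f i n ≤ b.1 n := by
  choose g hg using fun i ↦ exists_incSeq_ge (f i)
  have hbounded : Bounded (range g) := by
    by_contra hunbounded
    exact notMem_of_lt_csInf' (mk_range_le.trans_lt hκ) ⟨_, hunbounded, rfl⟩
  obtain ⟨b, hb⟩ := hbounded
  refine ⟨b, fun i ↦ ?_⟩
  have hgb : ∀ᶠ n in cofinite, (g i).1 n ≤ b.1 n := hb _ (mem_range_self i)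
  exact hgb.mono fun n ↦ (hg i n).trans

theorem exists_dominating_family :
    ∃ d : frakD.ord.ToType → IncSeq, Dominating (range d) := by
  have hne : {c | ∃ D : Set IncSeq, Dominating D ∧ c = #D}.Nonempty :=
    ⟨_, Set.univ, fun a ↦ ⟨a, trivial, by simp [LeStar]⟩, rfl⟩
  obtain ⟨D, hD, hcard⟩ := csInf_mem hne
  obtain ⟨e⟩ := Cardinal.eq.1 ((mk_ord_toType frakD).trans hcard)
  refine ⟨fun i ↦ (e i).1, ?_⟩
  rwa [range_comp' Subtype.val e, e.range_eq_univ, image_univ, Subtype.range_coe]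

theorem mk_finset_lt_of_aleph0_le {κ : Cardinal} (hκ : ℵ₀ ≤ κ) {α : Type*} (hα : #α < κ) :
    #(Finset α) < κ := by
  cases finite_or_infinite α
  · exact (lt_aleph0_of_finite _).trans_le hκ
  · rwa [mk_finset_of_infinite]

theorem exists_forall_infinite_inter_lt {Z : Set IncSeq} (hZ : ¬ Bounded Z) {κ : Type}
    (hκ : #κ < frakB) (d : IncSeq) (S : κ → Set ℕ) :
    ∃ z ∈ Z, ∀ a, (S a).Infinite → (S a ∩ {n | d.1 n < z.1 n}).Infinite := by
  have hnext : ∀ a k, (S a).Infinite → ∃ n ≥ k, n ∈ S a := fun a k ha ↦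
    (ha.exists_gt k).imp fun n hn ↦ ⟨hn.2.le, hn.1⟩
  choose! next hle hmem using hnext
  obtain ⟨s, hs⟩ := exists_eventually_le_of_mk_lt_frakB hκ next
  obtain ⟨z, hzZ, hz⟩ : ∃ z ∈ Z, ∃ᶠ k in cofinite, d.1 (s.1 k) < z.1 k := by
    by_contra! h
    exact hZ ⟨⟨d.1 ∘ s.1, d.2.comp s.2⟩, fun z hz ↦ by simpa [LeStar] using h z hz⟩
  refine ⟨z, hzZ, fun a ha ↦ Nat.frequently_atTop_iff_infinite.1 (frequently_atTop.2 fun m ↦ ?_)⟩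
  rw [Nat.cofinite_eq_atTop] at hs hz
  obtain ⟨k, hlt, hnext_le, hmk⟩ := (hz.and_eventually ((hs a).and (eventually_ge_atTop m))).exists
  refine ⟨next a k, hmk.trans (hle a k ha), hmem a k ha, ?_⟩
  calc d.1 (next a k) ≤ d.1 (s.1 k) := d.2.monotone hnext_le
    _ < z.1 k := hlt
    _ ≤ z.1 (next a k) := z.2.monotone (hle a k ha)

theorem exists_seq_forall_infinite_inter {ι : Type} [Preorder ι] [WellFoundedLT ι]
    (hι : ∀ i : ι, #(Iio i) < frakB) {Z : Set IncSeq} (hZ : ¬ Bounded Z) (d : ι → IncSeq) :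
    ∃ z : ι → IncSeq, (∀ i, z i ∈ Z) ∧ ∀ (i : ι) (F : Finset (Iio i)),
      {n | ∀ j ∈ F, (d j).1 n < (z j).1 n}.Infinite →
      ({n | ∀ j ∈ F, (d j).1 n < (z j).1 n} ∩ {n | (d i).1 n < (z i).1 n}).Infinite := by
  choose pick hpickZ hpick using fun i ↦
    exists_forall_infinite_inter_lt hZ (mk_finset_lt_of_aleph0_le aleph0_le_frakB (hι i)) (d i)
  let z : ι → IncSeq := wellFounded_lt.fix fun i z ↦
    pick i fun F ↦ {n | ∀ j ∈ F, (d j).1 n < (z j.1 j.2).1 n}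
  have hz : ∀ i, z i = pick i fun F ↦ {n | ∀ j ∈ F, (d j).1 n < (z j).1 n} :=
    fun i ↦ wellFounded_lt.fix_eq _ i
  refine ⟨z, fun i ↦ hz i ▸ hpickZ i _, fun i F hF ↦ ?_⟩
  rw [hz i]
  exact hpick i (fun F ↦ {n | ∀ j ∈ F, (d j).1 n < (z j).1 n}) F hF

theorem infinite_setOf_forall_mem_finset {ι : Type*} [LinearOrder ι] {C : ι → Set ℕ}
    (hC : ∀ (i : ι) (F : Finset (Iio i)), {n | ∀ j ∈ F, n ∈ C j}.Infinite →
      ({n | ∀ j ∈ F, n ∈ C j} ∩ C i).Infinite) (F : Finset ι) :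
    {n | ∀ j ∈ F, n ∈ C j}.Infinite := by
  classical
  induction F using Finset.induction_on_max with
  | empty => simpa using infinite_univ
  | insert i F hF ih =>
    have hsubtype : {n | ∀ j ∈ F.subtype (· ∈ Iio i), n ∈ C j} = {n | ∀ j ∈ F, n ∈ C j} := by
      ext n
      simpa using ⟨fun h j hj ↦ h j (hF j hj) hj, fun h j _ hj ↦ h j hj⟩
    have hinter := hC i (F.subtype (· ∈ Iio i))
    rw [hsubtype] at hinter
    exact (hinter ih).mono fun n hn ↦ (Finset.forall_mem_insert ..).2 ⟨hn.2, hn.1⟩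

theorem exists_free_ultrafilter_forall_mem {ι : Type*} {C : ι → Set ℕ}
    (hC : ∀ F : Finset ι, {n | ∀ j ∈ F, n ∈ C j}.Infinite) :
    ∃ U : Ultrafilter ℕ, Free U ∧ ∀ i, C i ∈ U := by
  have hne : NeBot ((⨅ i, 𝓟 (C i)) ⊓ atTop) := by
    rw [((hasBasis_iInf_principal_finite C).inf atTop_basis).neBot_iff]
    rintro ⟨t, m⟩ ⟨ht, -⟩
    obtain ⟨n, hn, hmn⟩ := (hC ht.toFinset).exists_gt m
    exact ⟨n, mem_iInter₂.2 fun j hj ↦ hn j (ht.mem_toFinset.2 hj), hmn.le⟩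
  obtain ⟨U, hU⟩ := Ultrafilter.exists_le ((⨅ i, 𝓟 (C i)) ⊓ atTop)
  refine ⟨U, ?_, fun i ↦ hU (mem_inf_of_left (mem_iInf_of_mem i (mem_principal_self _)))⟩
  rw [Free, Nat.cofinite_eq_atTop]
  exact hU.trans inf_le_right

theorem exists_free_ultrafilter_not_uBounded (hbd : frakB = frakD) {Z : Set IncSeq}
    (hZ : ¬ Bounded Z) : ∃ U, Free U ∧ ¬ UBounded U Z := by
  obtain ⟨d, hd⟩ := exists_dominating_family
  obtain ⟨z, hzZ, hz⟩ := exists_seq_forall_infinite_inter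
    (fun i ↦ by rw [hbd]; simpa using mk_Iio_lt i) hZ d
  obtain ⟨U, hU, hUd⟩ := exists_free_ultrafilter_forall_mem
    (infinite_setOf_forall_mem_finset (C := fun i ↦ {n | (d i).1 n < (z i).1 n}) hz)
  refine ⟨U, hU, fun ⟨b, hb⟩ ↦ ?_⟩
  obtain ⟨_, ⟨i, rfl⟩, hbi⟩ := hd b
  have hle_d : ∀ᶠ n in U, b.1 n ≤ (d i).1 n := hU hbi
  have hz_le : ∀ᶠ n in U, (z i).1 n ≤ b.1 n := hb _ (hzZ i)
  obtain ⟨n, ⟨hn_b, hn_z⟩, hn_d⟩ := ((hle_d.and hz_le).and (hUd i)).exists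
  exact (hn_z.trans hn_b).not_gt hn_d

theorem exists_eventually_le_of_forall_free (hbd : frakB = frakD) {Y : Type*} {g : Y → ℕ → ℕ}
    (hg : ∀ y, Monotone (g y))
    (h : ∀ U : Ultrafilter ℕ, Free U → ∃ b : ℕ → ℕ, ∀ y, ∀ᶠ n in U, g y n ≤ b n) :
    ∃ b : ℕ → ℕ, ∀ y, ∀ᶠ n in cofinite, g y n ≤ b n := by
  let g' (y : Y) : IncSeq := ⟨fun n ↦ n + g y n, strictMono_id.add_monotone (hg y)⟩
  have hbounded : Bounded (range g') := by
    by_contra hunbounded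
    obtain ⟨U, hU, hnot⟩ := exists_free_ultrafilter_not_uBounded hbd hunbounded
    obtain ⟨b, hb⟩ := h U hU
    obtain ⟨b', hb'⟩ := exists_incSeq_ge fun n ↦ n + b n
    refine hnot ⟨b', forall_mem_range.2 fun y ↦ ?_⟩
    filter_upwards [hb y] with n hn using (Nat.add_le_add_left hn n).trans (hb' n)
  obtain ⟨b, hb⟩ := hbounded
  refine ⟨b.1, fun y ↦ ?_⟩
  have hgb : ∀ᶠ n in cofinite, n + g y n ≤ b.1 n := hb _ (mem_range_self y)
  exact hgb.mono fun n ↦ (Nat.le_add_left _ _).trans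

end Combinatorics

section Covering

open Filter Set

variable {Y : Type*} [TopologicalSpace Y] {f : Filter ℕ}

/-- The common form of the Hurewicz property (`f` is the cofinite filter) and of the `U`-Menger
property (`f` is `U`): from every sequence of open covers one can select finite subfamilies such
that every point is covered by the `n`-th one for `f`-almost all `n`. -/
def FilterMenger (f : Filter ℕ) (Y : Type*) [TopologicalSpace Y] : Prop :=
  ∀ 𝒰 : ℕ → Set (Set Y), (∀ n, (∀ u ∈ 𝒰 n, IsOpen u) ∧ ⋃₀ 𝒰 n = Set.univ) →
    ∃ F : ℕ → Set (Set Y), (∀ n, F n ⊆ 𝒰 n ∧ (F n).Finite) ∧ ∀ y, ∀ᶠ n in f, y ∈ ⋃₀ F n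

theorem hurewicz_iff_filterMenger : Hurewicz Y ↔ FilterMenger cofinite Y := Iff.rfl

theorem uMenger_iff_filterMenger {U : Ultrafilter ℕ} : UMenger U Y ↔ FilterMenger U Y := Iff.rfl

theorem FilterMenger.mono {g : Filter ℕ} (h : FilterMenger f Y) (hgf : g ≤ f) :
    FilterMenger g Y := fun 𝒰 h𝒰 ↦ by
  obtain ⟨F, hF, hmem⟩ := h 𝒰 h𝒰
  exact ⟨F, hF, fun y ↦ (hmem y).filter_mono hgf⟩

theorem FilterMenger.of_surjective (h : FilterMenger f Y) {Z : Type*} [TopologicalSpace Z]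
    {φ : Y → Z} (hφ : Continuous φ) (hsurj : φ.Surjective) : FilterMenger f Z := fun 𝒰 h𝒰 ↦ by
  obtain ⟨F, hF, hmem⟩ := h (fun n ↦ preimage φ '' 𝒰 n) fun n ↦
    ⟨forall_mem_image.2 fun u hu ↦ ((h𝒰 n).1 u hu).preimage hφ, by
      rw [sUnion_image, ← preimage_iUnion₂, ← sUnion_eq_biUnion, (h𝒰 n).2, preimage_univ]⟩
  refine ⟨fun n ↦ 𝒰 n ∩ preimage φ ⁻¹' F n, fun n ↦ ⟨inter_subset_left,
    ((hF n).2.preimage hsurj.preimage_injective.injOn).subset inter_subset_right⟩, fun z ↦ ?_⟩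
  obtain ⟨y, rfl⟩ := hsurj z
  filter_upwards [hmem y] with n ⟨v, hv, hyv⟩
  obtain ⟨u, hu, rfl⟩ := (hF n).1 hv
  exact ⟨u, ⟨hu, hv⟩, hyv⟩

theorem FilterMenger.lindelofSpace [NeBot f] (h : FilterMenger f Y) : LindelofSpace Y := by
  refine ⟨isLindelof_of_countable_subcover fun V hV hcov ↦ ?_⟩
  obtain ⟨F, hF, hmem⟩ := h (fun _ ↦ range V) fun _ ↦
    ⟨forall_mem_range.2 hV, by rw [sUnion_range, univ_subset_iff.1 hcov]⟩
  have hindex : ∀ u ∈ ⋃ n, F n, ∃ i, V i = u := iUnion_subset fun n ↦ (hF n).1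
  choose i hi using hindex
  have hcount : Countable ↥(⋃ n, F n) :=
    (countable_iUnion fun n ↦ (hF n).2.countable).to_subtype
  refine ⟨range fun u : ↥(⋃ n, F n) ↦ i u u.2, countable_range _, fun y _ ↦ ?_⟩
  obtain ⟨n, u, hu, hyu⟩ := (hmem y).exists
  have hu' : u ∈ ⋃ n, F n := mem_iUnion.2 ⟨n, hu⟩
  exact mem_iUnion₂.2 ⟨i u hu', ⟨⟨u, hu'⟩, rfl⟩, (hi u hu').symm ▸ hyu⟩

/-- A sequence of open covers `{O n k | k}` such that `O n k` increases with `k` and decreases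
with `n`; in Lindelöf spaces the properties `FilterMenger f` can be tested on such sequences. -/
structure IsNestedCover (O : ℕ → ℕ → Set Y) : Prop where
  isOpen (n k : ℕ) : IsOpen (O n k)
  monotone (n : ℕ) : Monotone (O n)
  antitone (k : ℕ) : Antitone (O · k)
  iUnion_eq_univ (n : ℕ) : ⋃ k, O n k = Set.univ

theorem IsNestedCover.exists_rank {O : ℕ → ℕ → Set Y} (hO : IsNestedCover O) :
    ∃ g : Y → ℕ → ℕ, (∀ y, Monotone (g y)) ∧ ∀ y n k, y ∈ O n k ↔ g y n ≤ k := by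
  classical
  have hex : ∀ y n, ∃ k, y ∈ O n k := fun y n ↦ iUnion_eq_univ_iff.1 (hO.iUnion_eq_univ n) y
  refine ⟨fun y n ↦ Nat.find (hex y n), fun y m n hmn ↦ ?_, fun y n k ↦ ?_⟩
  · exact Nat.find_min' _ (hO.antitone _ hmn (Nat.find_spec (hex y n)))
  · exact ⟨fun hk ↦ Nat.find_min' (hex y n) hk,
      fun hk ↦ hO.monotone n hk (Nat.find_spec (hex y n))⟩

theorem FilterMenger.exists_eventually_mem (h : FilterMenger f Y) {O : ℕ → ℕ → Set Y}
    (hO : IsNestedCover O) : ∃ b : ℕ → ℕ, ∀ y, ∀ᶠ n in f, y ∈ O n (b n) := by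
  obtain ⟨F, hF, hmem⟩ := h (fun n ↦ range (O n)) fun n ↦
    ⟨forall_mem_range.2 (hO.isOpen n), by rw [sUnion_range, hO.iUnion_eq_univ]⟩
  have hsub : ∀ n, ∃ k, ⋃₀ F n ⊆ O n k := fun n ↦ by
    choose! i hi using (hF n).1
    obtain ⟨k, hk⟩ := ((hF n).2.image i).bddAbove
    refine ⟨k, sUnion_subset fun u hu ↦ ?_⟩
    rw [← hi hu]
    exact hO.monotone n (hk (mem_image_of_mem i hu))
  choose b hb using hsub
  exact ⟨b, fun y ↦ (hmem y).mono fun n hn ↦ hb n hn⟩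

theorem isNestedCover_dissipate_accumulate {e : ℕ → ℕ → Set Y} (he : ∀ n k, IsOpen (e n k))
    (hcov : ∀ n, ⋃ k, e n k = Set.univ) :
    IsNestedCover fun n k ↦ dissipate (fun i ↦ accumulate (e i) k) n where
  isOpen n k := (finite_Iic n).isOpen_biInter fun i _ ↦ isOpen_biUnion fun j _ ↦ he i j
  monotone n _ _ hkl := iInter₂_mono fun i _ ↦ monotone_accumulate hkl
  antitone _ := antitone_dissipate
  iUnion_eq_univ n := iUnion_eq_univ_iff.2 fun y ↦ by
    choose k hk using fun i ↦ iUnion_eq_univ_iff.1 (hcov i) y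
    exact ⟨partialSups k n, mem_dissipate.2 fun i hi ↦
      mem_accumulate.2 ⟨k i, le_partialSups_of_le k hi, hk i⟩⟩

theorem filterMenger_of_forall_isNestedCover [LindelofSpace Y]
    (h : ∀ O : ℕ → ℕ → Set Y, IsNestedCover O → ∃ b : ℕ → ℕ, ∀ y, ∀ᶠ n in f, y ∈ O n (b n)) :
    FilterMenger f Y := fun 𝒰 h𝒰 ↦ by
  rcases isEmpty_or_nonempty Y with _ | ⟨⟨y₀⟩⟩
  · exact ⟨fun _ ↦ ∅, fun n ↦ ⟨empty_subset _, finite_empty⟩, isEmptyElim⟩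
  have hsubcover : ∀ n, ∃ e : ℕ → Set Y, (∀ k, e k ∈ 𝒰 n) ∧ ⋃ k, e k = Set.univ := fun n ↦ by
    have hcov : Set.univ ⊆ ⋃ u : 𝒰 n, u.1 := by rw [← sUnion_eq_iUnion, (h𝒰 n).2]
    have : Nonempty (𝒰 n) := (mem_iUnion.1 (hcov (mem_univ y₀))).nonempty
    obtain ⟨e, he⟩ := isLindelof_univ.indexed_countable_subcover (fun u : 𝒰 n ↦ u.1)
      (fun u ↦ (h𝒰 n).1 u u.2) hcov
    exact ⟨fun k ↦ e k, fun k ↦ (e k).2, univ_subset_iff.1 he⟩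
  choose e he hcov using hsubcover
  obtain ⟨b, hb⟩ := h _ (isNestedCover_dissipate_accumulate (fun n k ↦ (h𝒰 n).1 _ (he n k)) hcov)
  refine ⟨fun n ↦ e n '' Iic (b n), fun n ↦
    ⟨image_subset_iff.2 fun k _ ↦ he n k, (finite_Iic _).image _⟩, fun y ↦ ?_⟩
  filter_upwards [hb y] with n hn
  rw [sUnion_image]
  exact mem_dissipate.1 hn n le_rfl

theorem hurewicz_of_forall_uMenger (hbd : frakB = frakD)
    (h : ∀ U : Ultrafilter ℕ, Free U → UMenger U Y) : Hurewicz Y := by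
  have : LindelofSpace Y := (uMenger_iff_filterMenger.1
    (h (hyperfilter ℕ) hyperfilter_le_cofinite)).lindelofSpace
  refine hurewicz_iff_filterMenger.2 (filterMenger_of_forall_isNestedCover fun O hO ↦ ?_)
  obtain ⟨g, hg, hmem⟩ := hO.exists_rank
  simp only [hmem]
  refine exists_eventually_le_of_forall_free hbd hg fun U hU ↦ ?_
  simpa only [hmem] using (uMenger_iff_filterMenger.1 (h U hU)).exists_eventually_mem hO

end Covering

theorem hereditarilyLindelofSpace_of_homeomorph {Y Z : Type*} [TopologicalSpace Y]
    [TopologicalSpace Z] [HereditarilyLindelofSpace Y] (φ : Y ≃ₜ Z) :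
    HereditarilyLindelofSpace Z :=
  .of_forall_isOpen fun s _ ↦ by
    rw [← φ.image_preimage s]
    exact (HereditarilyLindelofSpace.isLindelof _).image φ.continuous

theorem stmt10_general (hbd : frakB = frakD) (X : Type u) [TopologicalSpace X]
    (hX : ∀ U : Ultrafilter ℕ, Free U →
      ∀ (T : Type v) [TopologicalSpace T] [T35Space T] [Infinite T]
        [HereditarilyLindelofSpace T], Hurewicz T → UMenger U (X × T))
    (H : Type w) [TopologicalSpace H] [T35Space H] [Infinite H]
    [HereditarilyLindelofSpace H] (hH : Hurewicz H) :
    Hurewicz (X × H) := by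
  have : Small.{v} H := small_of_isGδ_singleton isGδ_singleton_of_hereditarilyLindelofSpace
  let φ := Shrink.homeomorph.{v} H
  have : T35Space (Shrink.{v} H) := φ.symm.isEmbedding.t35Space
  have : Infinite (Shrink.{v} H) := φ.toEquiv.infinite_iff.1 inferInstance
  have : HereditarilyLindelofSpace (Shrink.{v} H) := hereditarilyLindelofSpace_of_homeomorph φ
  have hShrink : Hurewicz (Shrink.{v} H) := hurewicz_iff_filterMenger.2
    ((hurewicz_iff_filterMenger.1 hH).of_surjective φ.continuous φ.surjective)
  refine hurewicz_of_forall_uMenger hbd fun U hU ↦ ?_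
  let ψ := (Homeomorph.refl X).prodCongr φ.symm
  exact uMenger_iff_filterMenger.2 ((uMenger_iff_filterMenger.1
    (hX U hU (Shrink.{v} H) hShrink)).of_surjective ψ.continuous ψ.surjective)

/-- assume `𝔟 = 𝔡`. In the class of hereditarily Lindelöf spaces, each
space which is productively `U`-Menger for all ultrafilters `U` is productively
Hurewicz. -/
theorem stmt10 (hbd : frakB = frakD)
    (X : Type u) [TopologicalSpace X] [T35Space X] [Infinite X]
    (hX : ∀ U : Ultrafilter ℕ, Free U →
      ∀ (T : Type v) [TopologicalSpace T] [T35Space T] [Infinite T]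
        [HereditarilyLindelofSpace T], UMenger U T → UMenger U (X × T))
    (H : Type w) [TopologicalSpace H] [T35Space H] [Infinite H]
    [HereditarilyLindelofSpace H] (hH : Hurewicz H) :
    Hurewicz (X × H) := by
  exact stmt10_general hbd X (fun U hU T _ _ _ _ hT ↦ hX U hU T
    (uMenger_iff_filterMenger.2 ((hurewicz_iff_filterMenger.1 hT).mono hU))) H hH
end

section
/- Assume 𝔟 = 𝔡. Then every unbounded set X ⊆ [ω]^ω contains a 𝔡-unbounded subset. -/
/-!
Enumerate a dominating set as `⟨d i | i < 𝔡⟩`. As `𝔟 = 𝔡`, each initial segment `{d j | j ≤ i}`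
has an upper bound, and the unbounded set `X` has an element `a i` not below that bound. Thus
`a i ≤* d j` forces `i < j`. A bounded subset of `{a i | i < 𝔡}` lies below a single `d j`, so all
its indices are less than `j` and it has fewer than `𝔡` elements. The whole set is unbounded, since
`a j` is not below `d j`, so it has at least `𝔟 = 𝔡` elements.
-/

open Cardinal

section Relation

universe u v

variable {α : Type u} {r : α → α → Prop}

theorem setBounded_insert [IsTrans α r] [IsDirected α r] {s : Set α} (hs : Set.Bounded r s)
    (a : α) : Set.Bounded r (insert a s) := by
  obtain ⟨b, hb⟩ := hs
  obtain ⟨c, hac, hbc⟩ := directed_of r a b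
  exact ⟨c, Set.forall_mem_insert.2 ⟨hac, fun x hx => _root_.trans (hb x hx) hbc⟩⟩

theorem exists_forall_rel_imp_lt [IsTrans α r] {ι : Type v} [LinearOrder ι] {d : ι → α}
    (hd : ∀ i, Set.Bounded r (d '' Set.Iic i)) {X : Set α} (hX : Set.Unbounded r X) :
    ∃ a : ι → α, Set.range a ⊆ X ∧ ∀ i j, r (a i) (d j) → i < j := by
  choose b hb using hd
  choose a haX hab using fun i => hX (b i)
  refine ⟨a, Set.range_subset_iff.2 haX, fun i j hij => lt_of_not_ge fun hji => hab i ?_⟩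
  exact _root_.trans hij (hb i (d j) (Set.mem_image_of_mem d hji))

theorem exists_preimage_subset_Iio [IsTrans α r] {ι : Type v} [Preorder ι] {a d : ι → α}
    (hdom : ∀ x, ∃ i, r x (d i)) (had : ∀ i j, r (a i) (d j) → i < j) {B : Set α}
    (hB : Set.Bounded r B) : ∃ j, a ⁻¹' B ⊆ Set.Iio j := by
  obtain ⟨c, hc⟩ := hB
  obtain ⟨j, hcj⟩ := hdom c
  exact ⟨j, fun i hi => had i j (_root_.trans (hc (a i) hi) hcj)⟩

theorem exists_subset_mk_le_forall_bounded_mk_lt [IsTrans α r] [IsDirected α r] {D X : Set α}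
    (hdom : ∀ x, ∃ d ∈ D, r x d) (hbdd : ∀ s : Set α, #s < #D → Set.Bounded r s)
    (hX : Set.Unbounded r X) :
    ∃ A ⊆ X, #D ≤ #A ∧ ∀ B ⊆ A, Set.Bounded r B → #B < #D := by
  obtain ⟨_, _, hord⟩ := exists_ord_eq_type_lt D
  have hIio (i : D) : #(Set.Iio i) < #D := mk_Iio_lt i hord
  have hdom' (x : α) : ∃ i : D, r x i := by simpa using hdom x
  have hIic (i : D) : Set.Bounded r (Subtype.val '' Set.Iic i) := by
    rw [← Set.Iio_insert, Set.image_insert_eq]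
    exact setBounded_insert (hbdd _ (mk_image_le.trans_lt (hIio i))) i
  obtain ⟨a, haX, had⟩ := exists_forall_rel_imp_lt hIic hX
  refine ⟨Set.range a, haX, ?_, fun B hBA hB => ?_⟩
  · by_contra! hlt
    obtain ⟨j, hj⟩ := exists_preimage_subset_Iio hdom' had (hbdd _ hlt)
    exact lt_irrefl j (hj (Set.mem_range_self j))
  · obtain ⟨j, hj⟩ := exists_preimage_subset_Iio hdom' had hB
    calc
      #B ≤ #(a ⁻¹' B) := mk_preimage_of_subset_range a B hBA
      _ ≤ #(Set.Iio j) := mk_le_mk_of_subset hj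
      _ < #D := hIio j

end Relation

theorem leStar_iff_eventuallyLE {a b : ℕ → ℕ} : LeStar a b ↔ a ≤ᶠ[Filter.cofinite] b :=
  Filter.eventually_cofinite.symm

theorem leStar_of_le {a b : ℕ → ℕ} (h : a ≤ b) : LeStar a b :=
  leStar_iff_eventuallyLE.2 (Filter.Eventually.of_forall h)

instance : IsTrans (ℕ → ℕ) LeStar where
  trans _ _ _ hab hbc := leStar_iff_eventuallyLE.2 <|
    (leStar_iff_eventuallyLE.1 hab).trans (leStar_iff_eventuallyLE.1 hbc)

instance : IsDirected IncSeq (Subrel LeStar StrictMono) :=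
  ⟨fun a b => ⟨⟨a.1 + b.1, a.2.add b.2⟩, leStar_of_le le_self_add, leStar_of_le le_add_self⟩⟩

theorem dominating_univ : Dominating Set.univ :=
  fun a => ⟨a, Set.mem_univ a, leStar_of_le le_rfl⟩

theorem exists_dominating_mk_eq_frakD : ∃ D : Set IncSeq, Dominating D ∧ frakD = #D :=
  csInf_mem (s := {c | ∃ D : Set IncSeq, Dominating D ∧ c = #D})
    ⟨_, Set.univ, dominating_univ, rfl⟩

theorem bounded_of_mk_lt_frakB {A : Set IncSeq} (hA : #A < frakB) : Bounded A := by
  by_contra h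
  exact hA.not_ge (csInf_le' ⟨A, h, rfl⟩)

/-- assume `𝔟 = 𝔡`. Then every unbounded set `X ⊆ [ω]^ω` contains a
`𝔡`-unbounded subset. -/
theorem stmt12 (hbd : frakB = frakD)
    (X : Set IncSeq) (hX : ¬ Bounded X) :
    ∃ A ⊆ X, DUnbounded A := by
  obtain ⟨D, hD, hcard⟩ := exists_dominating_mk_eq_frakD
  have hsmall (s : Set IncSeq) (hs : #s < #D) : Bounded s :=
    bounded_of_mk_lt_frakB (by rwa [hbd, hcard])
  simp only [DUnbounded, hcard]
  exact exists_subset_mk_le_forall_bounded_mk_lt (r := Subrel LeStar StrictMono) hD hsmall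
    ((Set.not_bounded_iff X).1 hX)
end
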